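/- Let G be a group, H a normal subgroup of G, Γ = G/H the quotient group, and f : G → Γ the canonical homomorphism. Let k be an infinite cardinal, {N_α}_{α<k} a G-invariant k-small system on G, and S a G-invariant k-additive algebra of subsets of G which is admissible with respect to {N_α}_{α<k}. Assume H ∈ S and that for every set E ⊆ G the saturation HE belongs to S. Define S' = {Y ⊆ Γ : f⁻¹(Y) ∈ S} and, for each α<k, N'_α = {Y ⊆ Γ : f⁻¹(Y) ∈ N_α}. Then S' is admissible with respect to {N'_α}_{α<k}; that is, for every α<k: S' \ N'_α ≠ ∅ and S' ∩ N'_α ≠ ∅; every F ∈ N'_α is contained in some B ∈ N'_α ∩ S'; and every family of pairwise disjoint sets from S' \ N'_α has cardinality at most k. -/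

import Mathlib

open Set Pointwise

universe u

/-- A class of subsets of a group `G` is `G`-invariant if it is closed under
left translations `A ↦ g • A = {g * x : x ∈ A}`. -/
def GInvariant {G : Type u} [Group G] (C : Set (Set G)) : Prop :=
  ∀ g : G, ∀ A ∈ C, g • A ∈ C

/-- A class of subsets is `k`-additive if it is closed under unions of
at most `k` of its members. -/
def kAdditive {G : Type u} (k : Cardinal.{u}) (C : Set (Set G)) : Prop :=
  ∀ (ι : Type u) (f : ι → Set G), Cardinal.mk ι ≤ k → (∀ i, f i ∈ C) → (⋃ i, f i) ∈ C

/-- An algebra of subsets: contains `∅`, closed under complements and finite unions. -/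
structure IsSetAlgebra {G : Type u} (S : Set (Set G)) : Prop where
  empty_mem : ∅ ∈ S
  compl_mem : ∀ A ∈ S, Aᶜ ∈ S
  union_mem : ∀ A ∈ S, ∀ B ∈ S, A ∪ B ∈ S

/-- `N_∞ = ⋂_{α<k} N_α`. -/
def NInf {G : Type u} (k : Cardinal.{u}) (N : Ordinal.{u} → Set (Set G)) : Set (Set G) :=
  {A | ∀ α < k.ord, A ∈ N α}

/-- A `G`-invariant `k`-small system on `G` (Definition 1.2). -/
structure SmallSystem {G : Type u} [Group G] (k : Cardinal.{u})
    (N : Ordinal.{u} → Set (Set G)) : Prop where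
  nonempty : ∀ α < k.ord, (N α).Nonempty
  empty_mem : ∀ α < k.ord, (∅ : Set G) ∈ N α
  invariant : ∀ α < k.ord, GInvariant (N α)
  downward : ∀ α < k.ord, ∀ E ∈ N α, ∀ F, F ⊆ E → F ∈ N α
  union_ninf : ∀ α < k.ord, ∀ E ∈ N α, ∀ F ∈ NInf k N, E ∪ F ∈ N α
  union_tail : ∀ α < k.ord, ∃ αs, α < αs ∧ αs < k.ord ∧
    ∀ (T : Set Ordinal.{u}) (E : Ordinal.{u} → Set G),
      (∀ β ∈ T, αs < β ∧ β < k.ord) → Set.InjOn E T →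
      (∀ β ∈ T, E β ∈ N β) → (⋃ β ∈ T, E β) ∈ N α
  directed : ∀ α < k.ord, ∀ β < k.ord, ∃ γ, α < γ ∧ β < γ ∧ γ < k.ord ∧
    N γ ⊆ N α ∧ N γ ⊆ N β

/-- Admissibility of a `G`-invariant `k`-additive algebra with respect to a
`k`-small system (Definition 1.3). -/
def Admissible {G : Type u} [Group G] (k : Cardinal.{u}) (S : Set (Set G))
    (N : Ordinal.{u} → Set (Set G)) : Prop :=
  ∀ α < k.ord,
    (S \ N α).Nonempty ∧ (S ∩ N α).Nonempty ∧
    (∀ E ∈ N α, ∃ F ∈ N α ∩ S, E ⊆ F) ∧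
    (∀ D : Set (Set G), D ⊆ S \ N α → D.PairwiseDisjoint id → Cardinal.mk D ≤ k)

/-- The smallest `G`-invariant `k`-additive algebra of subsets of `G`
containing the class `B`. -/
def genInvAlgebra {G : Type u} [Group G] (k : Cardinal.{u}) (B : Set (Set G)) : Set (Set G) :=
  {A | ∀ T : Set (Set G), B ⊆ T → IsSetAlgebra T → kAdditive k T → GInvariant T → A ∈ T}

/-- If `S` is admissible with respect to the `G`-invariant `k`-small system
`{N_α}_{α<k}`, `H ∈ S` is a normal subgroup and all saturations `H * E` belong
to `S`, then `S' = {Y ⊆ G/H : f⁻¹(Y) ∈ S}` is admissible with respect to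
`N'_α = {Y ⊆ G/H : f⁻¹(Y) ∈ N_α}` (with `f : G → G/H` canonical). -/
theorem quotient_admissible {G : Type u} [Group G] (H : Subgroup G) [H.Normal]
    (k : Cardinal.{u}) (hk : Cardinal.aleph0 ≤ k)
    (N : Ordinal.{u} → Set (Set G)) (hN : SmallSystem k N)
    (S : Set (Set G)) (hAlg : IsSetAlgebra S) (hkAdd : kAdditive k S)
    (hInv : GInvariant S) (hAdm : Admissible k S N)
    (hHS : (H : Set G) ∈ S)
    (hsat : ∀ E : Set G, (H : Set G) * E ∈ S) :
    Admissible k {Y : Set (G ⧸ H) | (QuotientGroup.mk : G → G ⧸ H) ⁻¹' Y ∈ S}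
      (fun α => {Y : Set (G ⧸ H) | (QuotientGroup.mk : G → G ⧸ H) ⁻¹' Y ∈ N α}) := by
  have hS : ∀ Y : Set (G ⧸ H), (QuotientGroup.mk : G → G ⧸ H) ⁻¹' Y ∈ S := by
    intro Y
    have h := hsat ((QuotientGroup.mk : G → G ⧸ H) ⁻¹' Y)
    have e : (H : Set G) * ((QuotientGroup.mk : G → G ⧸ H) ⁻¹' Y)
        = (QuotientGroup.mk : G → G ⧸ H) ⁻¹' Y := by
      ext x
      constructor
      · rintro ⟨a, ha, b, hb, rfl⟩
        have h1 : ((a : G) : G ⧸ H) = 1 := (QuotientGroup.eq_one_iff a).2 ha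
        simpa [h1] using hb
      · intro hx
        exact ⟨1, H.one_mem, x, hx, one_mul x⟩
    rwa [e] at h
  intro α hα
  obtain ⟨⟨A, -, hA⟩, -, -, hD⟩ := hAdm α hα
  refine ⟨⟨univ, hS _, fun h => hA (hN.downward α hα _ h A (fun _ _ => trivial))⟩,
    ⟨∅, hS _, ?_⟩, fun E hE => ⟨E, ⟨hE, hS E⟩, Subset.rfl⟩, ?_⟩
  · simpa using hN.empty_mem α hα
  · intro D hDs hDd
    have inj : Function.Injective
        (fun Y : Set (G ⧸ H) => (QuotientGroup.mk : G → G ⧸ H) ⁻¹' Y) :=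
      Set.preimage_injective.2 Quotient.mk_surjective
    rw [← Cardinal.mk_image_eq (s := D) inj]
    apply hD
    · rintro _ ⟨Y, hY, rfl⟩
      exact ⟨hS Y, (hDs hY).2⟩
    · rintro _ ⟨Y, hY, rfl⟩ _ ⟨Z, hZ, rfl⟩ hne
      have hYZ : Y ≠ Z := fun h => hne (by rw [h])
      exact Disjoint.preimage _ (hDd hY hZ hYZ)
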